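/- Let L > 0, ε ∈ [0, 1), and γ ≥ 2/(L(1+ε)). Consider f : ℝ → ℝ, f(x) = (L/2)x², and let x_0 ≠ 0. Define d_t = (1+ε)L x_t and x_{t+1} = x_t − γ d_t. Then |d_t − f'(x_t)| ≤ ε|f'(x_t)| for all t (so d_t is an admissible inexact gradient with relative error ε), x_t = (1 − γL(1+ε))^t x_0, and |x_t| ≥ |x_0| > 0 for all t; in particular the inexact gradient descent iterates do not converge to the minimizer 0. -/

import Mathlib

/-!
The oracle `(1 + ε) ∇f` is admissible, and it is the exact gradient of a quadratic of curvature
`L (1 + ε)`. A step `γ ≥ 2 / (L (1 + ε))` overshoots the minimizer so far that the multiplier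
`1 - γ L (1 + ε)` of the resulting linear iteration is at most `-1`.
-/

open Filter Topology
open scoped Gradient

theorem eq_pow_smul_of_succ_eq_smul {M α : Type*} [Monoid M] [MulAction M α] {a : M} {u : ℕ → α}
    (hu : ∀ n, u (n + 1) = a • u n) (n : ℕ) : u n = a ^ n • u 0 := by
  induction n with
  | zero => rw [pow_zero, one_smul]
  | succ n ih => rw [hu, ih, pow_succ', mul_smul]

theorem one_le_abs_one_sub_mul_of_two_div_le {K : Type*} [Field K] [LinearOrder K]
    [IsStrictOrderedRing K] {a γ : K} (ha : 0 < a) (hγ : 2 / a ≤ γ) : 1 ≤ |1 - γ * a| := by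
  have two_le : 2 ≤ γ * a := (div_le_iff₀ ha).mp hγ
  exact le_abs.mpr (Or.inr (by linarith))

theorem not_tendsto_zero_of_forall_le_norm {ι E : Type*} [SeminormedAddGroup E] {l : Filter ι}
    [l.NeBot] {u : ι → E} {c : ℝ} (hc : 0 < c) (hu : ∀ i, c ≤ ‖u i‖) : ¬Tendsto u l (𝓝 0) :=
  fun h ↦ hc.not_ge (ge_of_tendsto' (tendsto_zero_iff_norm_tendsto_zero.mp h) hu)

section NormSMul

variable {𝕜 E : Type*} [NormedDivisionRing 𝕜] [SeminormedAddCommGroup E] [Module 𝕜 E]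
  [NormSMulClass 𝕜 E]

theorem norm_le_norm_pow_smul {a : 𝕜} (ha : 1 ≤ ‖a‖) (n : ℕ) (v : E) : ‖v‖ ≤ ‖a ^ n • v‖ := by
  rw [norm_smul, norm_pow]
  exact le_mul_of_one_le_left (norm_nonneg v) (one_le_pow₀ ha)

theorem norm_one_add_smul_sub_self (ε : 𝕜) (v : E) : ‖(1 + ε) • v - v‖ = ‖ε‖ * ‖v‖ := by
  rw [add_smul, one_smul, add_sub_cancel_left, norm_smul]

end NormSMul

section Quadratic

variable {E : Type*} [NormedAddCommGroup E] [InnerProductSpace ℝ E] [CompleteSpace E]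

theorem hasGradientAt_half_mul_norm_sq (L : ℝ) (x : E) :
    HasGradientAt (fun y : E ↦ L / 2 * ‖y‖ ^ 2) (L • x) x := by
  rw [hasGradientAt_iff_hasFDerivAt]
  refine ((hasStrictFDerivAt_norm_sq x).hasFDerivAt.const_mul (L / 2)).congr_fderiv ?_
  ext v
  simp only [smul_apply, coe_innerSL_apply, nsmul_eq_mul, Nat.cast_ofNat, smul_eq_mul, map_smul,
    InnerProductSpace.toDual_apply_apply]
  ring

theorem inexact_gd_divergence_general {L ε γ : ℝ} (hL : 0 < L) (hε : 0 ≤ ε)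
    (hγ : 2 / (L * (1 + ε)) ≤ γ) {f : E → ℝ} (hf : f = fun x ↦ L / 2 * ‖x‖ ^ 2)
    {x0 : E} (hx0 : x0 ≠ 0) {d x : ℕ → E} (hinit : x 0 = x0)
    (hd : ∀ t, d t = ((1 + ε) * L) • x t) (hrec : ∀ t, x (t + 1) = x t - γ • d t) :
    (∀ t, ‖d t - ∇ f (x t)‖ ≤ ε * ‖∇ f (x t)‖) ∧
      (∀ t, x t = (1 - γ * L * (1 + ε)) ^ t • x0) ∧
      (∀ t, ‖x0‖ ≤ ‖x t‖) ∧ 0 < ‖x0‖ ∧ ¬Tendsto x atTop (𝓝 0) := by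
  have gradient_f (y : E) : ∇ f y = L • y := hf ▸ (hasGradientAt_half_mul_norm_sq L y).gradient
  have admissible (t : ℕ) : ‖d t - ∇ f (x t)‖ ≤ ε * ‖∇ f (x t)‖ := by
    rw [hd, gradient_f, mul_smul, norm_one_add_smul_sub_self, Real.norm_of_nonneg hε]
  have step (t : ℕ) : x (t + 1) = (1 - γ * L * (1 + ε)) • x t := by
    rw [hrec, hd]
    module
  have closed_form (t : ℕ) : x t = (1 - γ * L * (1 + ε)) ^ t • x0 :=
    hinit ▸ eq_pow_smul_of_succ_eq_smul step t
  have one_le_multiplier : 1 ≤ ‖1 - γ * L * (1 + ε)‖ := by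
    rw [mul_assoc]
    exact one_le_abs_one_sub_mul_of_two_div_le (by positivity) hγ
  have norm_le (t : ℕ) : ‖x0‖ ≤ ‖x t‖ :=
    closed_form t ▸ norm_le_norm_pow_smul one_le_multiplier t x0
  have norm_pos : 0 < ‖x0‖ := norm_pos_iff.mpr hx0
  exact ⟨admissible, closed_form, norm_le, norm_pos,
    not_tendsto_zero_of_forall_le_norm norm_pos norm_le⟩

end Quadratic

/-- For `γ ≥ 2/(L(1+ε))`, the inexact gradient descent with
oracle `d t = (1+ε) L x t` (an admissible inexact gradient with relative error
`ε`) on `f(x) = (L/2) x²` satisfies `x t = (1 - γL(1+ε))^t x₀` and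
`|x t| ≥ |x₀| > 0`, hence the iterates do not converge to the minimizer `0`. -/
theorem inexact_gd_divergence (L ε γ : ℝ) (hL : 0 < L)
    (hε : ε ∈ Set.Ico (0 : ℝ) 1) (hγ : 2 / (L * (1 + ε)) ≤ γ)
    (f : ℝ → ℝ) (hf : f = fun x => L / 2 * x ^ 2)
    (x0 : ℝ) (hx0 : x0 ≠ 0)
    (d x : ℕ → ℝ) (hinit : x 0 = x0)
    (hd : ∀ t, d t = (1 + ε) * L * x t)
    (hrec : ∀ t, x (t + 1) = x t - γ * d t) :
    (∀ t, |d t - deriv f (x t)| ≤ ε * |deriv f (x t)|) ∧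
      (∀ t, x t = (1 - γ * L * (1 + ε)) ^ t * x0) ∧
      (∀ t, |x0| ≤ |x t|) ∧ 0 < |x0| ∧
      ¬Filter.Tendsto x Filter.atTop (nhds 0) := by
  simpa only [gradient_eq_deriv', smul_eq_mul, Real.norm_eq_abs] using
    inexact_gd_divergence_general hL hε.1 hγ (by simpa only [Real.norm_eq_abs, sq_abs] using hf)
      hx0 hinit hd hrec
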